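/- Let d, C, N be positive integers. Let f_1, ..., f_{N-1} : ℝ^d → ℝ^d be maps such that f_i is Lipschitz with constant L_i, and let L = max_{1 ≤ i ≤ N-1} L_i. Let W : ℝ^d → ℝ^C be a linear map that is Lipschitz with constant L_W. Let σ_1, ..., σ_N ≥ 0 and let A_1, ..., A_N and A'_1, ..., A'_N be vectors in ℝ^d (with Euclidean norm) satisfying: ‖A_1 − A'_1‖ ≤ σ_1; A_{i+1} = f_i(A_i) for 1 ≤ i ≤ N−1; and ‖A'_{i+1} − f_i(A'_i)‖ ≤ σ_{i+1} for 1 ≤ i ≤ N−1. Then for every class index y ∈ {1, ..., C}, ℒ(W(A_N), y) − ℒ(W(A'_N), y) ≤ √2 · L_W · Σ_{i=1}^N L^{N−i} σ_i, where ℒ(z, y) = log(Σ_{j=1}^C exp(z_j)) − z_y is the cross-entropy loss with respect to the logits z. -/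

import Mathlib

/-- Cross-entropy loss of a logit vector `z : ℝ^C` at label `y`:
`ℒ(z, y) = log (∑ j, exp (z j)) - z y`. -/
noncomputable def crossEntropy {C : ℕ} (z : EuclideanSpace ℝ (Fin C)) (y : Fin C) : ℝ :=
  Real.log (∑ j, Real.exp (z j)) - z y

/-!
The error `‖A i - A' i‖` is amplified by at most the Lipschitz constant of layer `i` and then
increased by at most `σ (i + 1)`, so it obeys a discrete Grönwall recursion. The loss is
`√2`-Lipschitz in the logits: `log (∑ j, exp (z j))` grows by at most the largest increment of a
coordinate of `z`, so the loss grows by at most the largest difference of two increments, and two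
coordinates of a vector of norm `r` differ by at most `√2 * r`.
-/

open Finset
open scoped NNReal

theorem le_sum_prod_mul_of_succ_le_mul_add {R : Type*} [CommRing R] [PartialOrder R]
    [IsOrderedRing R] {u b c : ℕ → R} {m n : ℕ} (hmn : m ≤ n) (hc : ∀ i ≥ m, 0 ≤ c i)
    (hm : u m ≤ b m) (hu : ∀ i ∈ Ico m n, u (i + 1) ≤ c i * u i + b (i + 1)) :
    u n ≤ ∑ i ∈ Icc m n, (∏ j ∈ Ico i n, c j) * b i := by
  have prod_nonneg_of_le {k : ℕ} (hk : m ≤ k) : 0 ≤ ∏ j ∈ Ico k n, c j :=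
    prod_nonneg fun j hj ↦ hc j (hk.trans (mem_Ico.mp hj).1)
  -- Grönwall needs the recursion at every index `i ≥ m`; forcing by the exact defects
  -- `u (i + 1) - c i * u i` makes it hold there, and `hu` then bounds those with `i < n`.
  calc u n
    _ ≤ u m * ∏ j ∈ Ico m n, c j +
          ∑ i ∈ Ico m n, (u (i + 1) - c i * u i) * ∏ j ∈ Ico (i + 1) n, c j :=
        discrete_gronwall_prod_general (fun i _ ↦ by simp) hc hmn
    _ ≤ b m * ∏ j ∈ Ico m n, c j +
          ∑ i ∈ Ico m n, b (i + 1) * ∏ j ∈ Ico (i + 1) n, c j := by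
        refine add_le_add (mul_le_mul_of_nonneg_right hm (prod_nonneg_of_le le_rfl))
          (sum_le_sum fun i hi ↦ mul_le_mul_of_nonneg_right ?_ (prod_nonneg_of_le ?_))
        · exact sub_le_iff_le_add'.mpr (hu i hi)
        · exact (mem_Ico.mp hi).1.trans i.le_succ
    _ = ∑ i ∈ Icc m n, (∏ j ∈ Ico i n, c j) * b i := by
        rw [sum_Ico_add' (fun i ↦ b i * ∏ j ∈ Ico i n, c j), Ico_add_one_add_one_eq_Ioc,
          add_sum_Ioc_eq_sum_Icc (f := fun i ↦ b i * ∏ j ∈ Ico i n, c j) hmn]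
        simp only [mul_comm]

theorem dist_orbit_pseudoOrbit_le {X : ℕ → Type*} [∀ i, PseudoMetricSpace (X i)]
    {f : ∀ i, X i → X (i + 1)} {K : ℕ → ℝ≥0} {ε : ℕ → ℝ} {x x' : ∀ i, X i} {m n : ℕ}
    (hmn : m ≤ n) (hf : ∀ i ∈ Ico m n, LipschitzWith (K i) (f i))
    (hm : dist (x m) (x' m) ≤ ε m) (hx : ∀ i ∈ Ico m n, x (i + 1) = f i (x i))
    (hx' : ∀ i ∈ Ico m n, dist (x' (i + 1)) (f i (x' i)) ≤ ε (i + 1)) :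
    dist (x n) (x' n) ≤ ∑ i ∈ Icc m n, (∏ j ∈ Ico i n, (K j : ℝ)) * ε i := by
  refine le_sum_prod_mul_of_succ_le_mul_add (u := fun i ↦ dist (x i) (x' i)) hmn
    (fun i _ ↦ (K i).coe_nonneg) hm fun i hi ↦ ?_
  calc dist (x (i + 1)) (x' (i + 1))
    _ ≤ dist (f i (x i)) (f i (x' i)) + dist (x' (i + 1)) (f i (x' i)) := by
        rw [hx i hi]
        exact dist_triangle_right _ _ _
    _ ≤ K i * dist (x i) (x' i) + ε (i + 1) :=
        add_le_add ((hf i hi).dist_le_mul _ _) (hx' i hi)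

theorem norm_apply_sub_apply_le_sqrt_two_mul_norm {ι E : Type*} [Fintype ι]
    [SeminormedAddCommGroup E] (v : PiLp 2 fun _ : ι ↦ E) (i j : ι) :
    ‖v i - v j‖ ≤ √2 * ‖v‖ := by
  classical
  obtain rfl | hij := eq_or_ne i j
  · rw [sub_self, norm_zero]
    positivity
  have two_coords_le : ‖v i‖ ^ 2 + ‖v j‖ ^ 2 ≤ ‖v‖ ^ 2 := by
    rw [PiLp.norm_sq_eq_of_L2, ← sum_pair (f := fun k ↦ ‖v k‖ ^ 2) hij]
    exact sum_le_univ_sum_of_nonneg fun k ↦ sq_nonneg ‖v k‖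
  refine le_of_sq_le_sq ?_ (by positivity)
  calc ‖v i - v j‖ ^ 2
    _ ≤ (‖v i‖ + ‖v j‖) ^ 2 := by gcongr; exact norm_sub_le _ _
    _ ≤ 2 * (‖v i‖ ^ 2 + ‖v j‖ ^ 2) := add_sq_le
    _ ≤ 2 * ‖v‖ ^ 2 := by gcongr
    _ = (√2 * ‖v‖) ^ 2 := by rw [mul_pow, Real.sq_sqrt zero_le_two]

theorem log_sum_exp_le_log_sum_exp_add {ι : Type*} {s : Finset ι} (hs : s.Nonempty)
    {a b : ι → ℝ} {c : ℝ} (h : ∀ i ∈ s, a i ≤ b i + c) :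
    Real.log (∑ i ∈ s, Real.exp (a i)) ≤ Real.log (∑ i ∈ s, Real.exp (b i)) + c := by
  have sum_exp_pos (g : ι → ℝ) : 0 < ∑ i ∈ s, Real.exp (g i) :=
    sum_pos (fun i _ ↦ Real.exp_pos (g i)) hs
  calc Real.log (∑ i ∈ s, Real.exp (a i))
    _ ≤ Real.log (∑ i ∈ s, Real.exp (b i + c)) :=
        Real.log_le_log (sum_exp_pos a) (sum_le_sum fun i hi ↦ Real.exp_le_exp.mpr (h i hi))
    _ = Real.log (∑ i ∈ s, Real.exp (b i)) + c := by
        simp only [Real.exp_add, ← sum_mul]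
        rw [Real.log_mul (sum_exp_pos b).ne' (Real.exp_pos c).ne', Real.log_exp]

theorem lipschitzWith_crossEntropy {C : ℕ} (y : Fin C) :
    LipschitzWith (NNReal.sqrt 2) fun z ↦ crossEntropy z y := by
  refine LipschitzWith.of_le_add_mul _ fun z w ↦ ?_
  have increment_le (j : Fin C) : z j ≤ w j + (z y - w y + √2 * dist z w) := by
    have h := (le_abs_self _).trans (norm_apply_sub_apply_le_sqrt_two_mul_norm (z - w) j y)
    rw [← dist_eq_norm, PiLp.sub_apply, PiLp.sub_apply] at h
    linarith
  have h := log_sum_exp_le_log_sum_exp_add ⟨y, mem_univ y⟩ fun j _ ↦ increment_le j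
  rw [Real.coe_sqrt, NNReal.coe_ofNat, crossEntropy, crossEntropy]
  linarith

theorem loss_deviation_bound_general {X : ℕ → Type*} [∀ i, PseudoMetricSpace (X i)]
    {C N : ℕ} (hN : 1 ≤ N) {f : ∀ i, X i → X (i + 1)} {K : ℕ → ℝ≥0}
    (hf : ∀ i ∈ Ico 1 N, LipschitzWith (K i) (f i))
    {W : X N → EuclideanSpace ℝ (Fin C)} {LW : ℝ≥0} (hW : LipschitzWith LW W)
    {σ : ℕ → ℝ} {A A' : ∀ i, X i} (h1 : dist (A 1) (A' 1) ≤ σ 1)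
    (hA : ∀ i ∈ Ico 1 N, A (i + 1) = f i (A i))
    (hA' : ∀ i ∈ Ico 1 N, dist (A' (i + 1)) (f i (A' i)) ≤ σ (i + 1)) (y : Fin C) :
    |crossEntropy (W (A N)) y - crossEntropy (W (A' N)) y| ≤
      √2 * LW * ∑ i ∈ Icc 1 N, (∏ j ∈ Ico i N, (K j : ℝ)) * σ i :=
  calc |crossEntropy (W (A N)) y - crossEntropy (W (A' N)) y|
    _ ≤ √2 * LW * dist (A N) (A' N) := by
        simpa [Real.dist_eq] using ((lipschitzWith_crossEntropy y).comp hW).dist_le_mul (A N) (A' N)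
    _ ≤ √2 * LW * ∑ i ∈ Icc 1 N, (∏ j ∈ Ico i N, (K j : ℝ)) * σ i := by
        gcongr
        exact dist_orbit_pseudoOrbit_le hN hf h1 hA hA'

theorem loss_deviation_bound
    (d C N : ℕ) (hd : 0 < d) (hC : 0 < C) (hN : 0 < N)
    (f : ℕ → EuclideanSpace ℝ (Fin d) → EuclideanSpace ℝ (Fin d))
    (Li : ℕ → NNReal)
    (hf : ∀ i ∈ Finset.Icc 1 (N - 1), LipschitzWith (Li i) (f i))
    (L : NNReal) (hL : L = (Finset.Icc 1 (N - 1)).sup Li)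
    (W : EuclideanSpace ℝ (Fin d) →ₗ[ℝ] EuclideanSpace ℝ (Fin C))
    (LW : NNReal) (hW : LipschitzWith LW W)
    (σ : ℕ → ℝ) (hσ : ∀ i ∈ Finset.Icc 1 N, 0 ≤ σ i)
    (A A' : ℕ → EuclideanSpace ℝ (Fin d))
    (h1 : ‖A 1 - A' 1‖ ≤ σ 1)
    (hA : ∀ i ∈ Finset.Icc 1 (N - 1), A (i + 1) = f i (A i))
    (hA' : ∀ i ∈ Finset.Icc 1 (N - 1), ‖A' (i + 1) - f i (A' i)‖ ≤ σ (i + 1))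
    (y : Fin C) :
    crossEntropy (W (A N)) y - crossEntropy (W (A' N)) y ≤
      Real.sqrt 2 * (LW : ℝ) * ∑ i ∈ Finset.Icc 1 N, (L : ℝ) ^ (N - i) * σ i := by
  simp only [← dist_eq_norm, Icc_sub_one_right_eq_Ico_of_not_isMin (not_isMin_of_lt hN)]
    at hf hL h1 hA hA'
  simpa using (le_abs_self _).trans (loss_deviation_bound_general hN
    (fun i hi ↦ (hf i hi).weaken (hL ▸ le_sup hi : Li i ≤ L)) hW h1 hA hA' y)
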